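/- Let A be a 4-dimensional absolute-valued real algebra. Then A satisfies the identity (x, x, x²) = 0 (i.e. (x x)(x²) = x (x x²) for all x ∈ A, where x² = xx) if and only if A is isomorphic to ℍ or to ℍ*. -/

import Mathlib

section Measure

open MeasureTheory

/-- Linear isometries of a finite-dimensional normed space preserve Haar measure. -/
theorem LinearIsometryEquiv.measurePreserving_addHaar {E : Type*} [NormedAddCommGroup E]
    [NormedSpace ℝ E] [FiniteDimensional ℝ E] [MeasurableSpace E] [BorelSpace E]
    (μ : Measure E) [μ.IsAddHaarMeasure] (f : E ≃ₗᵢ[ℝ] E) : MeasurePreserving f μ μ := by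
  have hball := μ.addHaar_image_linearMap (f : E →ₗ[ℝ] E) (Metric.ball 0 1)
  have himage : (f : E →ₗ[ℝ] E) '' Metric.ball 0 1 = Metric.ball 0 1 := by
    simp
  have hpos : μ (Metric.ball 0 1) ≠ 0 := (Metric.measure_ball_pos μ 0 one_pos).ne'
  have hdet : ENNReal.ofReal |LinearMap.det (f : E →ₗ[ℝ] E)| = 1 := by
    rw [himage] at hball
    exact ((ENNReal.eq_div_iff hpos measure_ball_lt_top.ne).2 (by rw [mul_comm, ← hball])).trans
      (ENNReal.div_self hpos measure_ball_lt_top.ne)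
  have hdet_abs : |LinearMap.det (f : E →ₗ[ℝ] E)| = 1 := by simpa using hdet
  have hdet_ne : LinearMap.det (f : E →ₗ[ℝ] E) ≠ 0 := by
    intro h
    simp [h] at hdet_abs
  refine ⟨f.continuous.measurable, ?_⟩
  have hmap := μ.map_linearMap_addHaar_eq_smul_addHaar hdet_ne
  rw [abs_inv, hdet_abs] at hmap
  simpa using hmap

/-- The norm of a finite-dimensional absolute-valued real algebra satisfies the parallelogram
identity. -/
theorem parallelogram_of_norm_mul {A : Type*} [NormedAddCommGroup A] [NormedSpace ℝ A]
    [FiniteDimensional ℝ A] (mul : A →ₗ[ℝ] A →ₗ[ℝ] A)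
    (habs : ∀ x y : A, ‖mul x y‖ = ‖x‖ * ‖y‖) (x y : A) :
    ‖x + y‖ * ‖x + y‖ + ‖x - y‖ * ‖x - y‖ = 2 * (‖x‖ * ‖x‖ + ‖y‖ * ‖y‖) := by
  rcases subsingleton_or_nontrivial A with _ | _
  · simp [Subsingleton.elim x 0, Subsingleton.elim y 0]
  let _ : MeasurableSpace A := borel A
  have : BorelSpace A := ⟨rfl⟩
  obtain ⟨v, hv⟩ := exists_norm_eq A (c := 2⁻¹) (by norm_num)
  have hv0 : v ≠ 0 := by rintro rfl; norm_num at hv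
  obtain ⟨φ, -, hφ⟩ := exists_dual_vector ℝ v (norm_ne_zero_iff.2 hv0)
  have hφv : φ v ≠ 0 := by rw [hφ, hv]; norm_num
  let μ : Measure A := Measure.addHaar
  let w : A → ℝ := fun y => max 0 (1 - ‖y‖)
  have hw_cont : Continuous w := by fun_prop
  have hw_supp : HasCompactSupport w := by
    refine HasCompactSupport.of_support_subset_isCompact (isCompact_closedBall (0 : A) 1) ?_
    intro y hy
    by_contra hlt
    have : 1 < ‖y‖ := by simpa using hlt
    exact hy (max_eq_left (by linarith))
  let F : A → A → ℝ := fun x y => φ (mul x y) ^ 2 * w y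
  have hmul_cont : ∀ x, Continuous (mul x) := fun x => (mul x).continuous_of_finiteDimensional
  have hF_int : ∀ x, Integrable (F x) μ := fun x =>
    Continuous.integrable_of_hasCompactSupport
      (((φ.continuous.comp (hmul_cont x)).pow 2).mul hw_cont) hw_supp.mul_left
  let c : ℝ := ∫ y, φ y ^ 2 * w y ∂μ
  have hc : 0 < c :=
    Continuous.integral_pos_of_hasCompactSupport_nonneg_nonzero (x := v)
      ((φ.continuous.pow 2).mul hw_cont) hw_supp.mul_left
      (fun y => mul_nonneg (sq_nonneg _) (le_max_left _ _))
      (mul_ne_zero (pow_ne_zero 2 hφv) (by simp only [w, hv]; norm_num))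
  have hQ_unit : ∀ x, ‖x‖ = 1 → ∫ y, F x y ∂μ = c := by
    intro x hx
    let f : A ≃ₗᵢ[ℝ] A :=
      LinearIsometry.toLinearIsometryEquiv ⟨mul x, fun y => by rw [habs, hx, one_mul]⟩ rfl
    have hcv := (f.measurePreserving_addHaar μ).integral_comp
      f.toHomeomorph.measurableEmbedding (fun y => φ y ^ 2 * w y)
    refine Eq.trans ?_ hcv
    refine integral_congr_ae (ae_of_all _ fun y => ?_)
    have hw_f : w (f y) = w y := by simp only [w, f.norm_map]
    simp only [hw_f]
    rfl
  have hQ : ∀ x, ∫ y, F x y ∂μ = c * (‖x‖ * ‖x‖) := by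
    intro x
    rcases eq_or_ne x 0 with rfl | hx
    · simp [F]
    have hx' : ‖x‖ ≠ 0 := norm_ne_zero_iff.2 hx
    have hscale : F x = fun y => (‖x‖ * ‖x‖) * F (‖x‖⁻¹ • x) y := by
      funext y
      simp only [F, map_smul, LinearMap.smul_apply, smul_eq_mul]
      field_simp
    rw [hscale, integral_const_mul, hQ_unit _ (by simp [norm_smul, hx']), mul_comm]
  have hsum : ∫ z, F (x + y) z ∂μ + ∫ z, F (x - y) z ∂μ
      = 2 * (∫ z, F x z ∂μ + ∫ z, F y z ∂μ) := by
    rw [← integral_add (hF_int _) (hF_int _), ← integral_add (hF_int _) (hF_int _),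
      ← integral_const_mul]
    refine integral_congr_ae (ae_of_all _ fun z => ?_)
    simp only [F, map_add, map_sub, LinearMap.add_apply, LinearMap.sub_apply]
    ring
  simp only [hQ] at hsum
  refine mul_left_cancel₀ hc.ne' ?_
  linarith

end Measure

/-- A four-dimensional absolute-valued real algebra is isometric to `ℍ`. -/
theorem exists_isometry_quaternion {A : Type*} [NormedAddCommGroup A] [NormedSpace ℝ A]
    (mul : A →ₗ[ℝ] A →ₗ[ℝ] A) (habs : ∀ x y : A, ‖mul x y‖ = ‖x‖ * ‖y‖)
    (hdim : Module.finrank ℝ A = 4) : Nonempty (A ≃ₗᵢ[ℝ] Quaternion ℝ) := by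
  have : FiniteDimensional ℝ A := .of_finrank_pos (by omega)
  let _ : InnerProductSpace ℝ A := InnerProductSpace.ofNorm ℝ (parallelogram_of_norm_mul mul habs)
  exact ⟨((stdOrthonormalBasis ℝ A).reindex (finCongr hdim)).repr.trans
    ((stdOrthonormalBasis ℝ (Quaternion ℝ)).reindex
      (finCongr Quaternion.finrank_eq_four)).repr.symm⟩

section Classification

open Quaternion

section UnitalComposition

variable {E : Type*} [NormedAddCommGroup E] [InnerProductSpace ℝ E]

theorem inner_map_left_of_norm_mul (C : E →ₗ[ℝ] E →ₗ[ℝ] E)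
    (hC : ∀ x y, ‖C x y‖ = ‖x‖ * ‖y‖) (x y z : E) :
    inner ℝ (C x y) (C x z) = ‖x‖ ^ 2 * inner ℝ y z := by
  have h := hC x (y + z)
  have h₂ := congrArg (· ^ 2) h
  simp only [map_add, mul_pow, norm_add_sq_real, hC] at h₂
  linarith

theorem inner_add_inner_of_left_unit (C : E →ₗ[ℝ] E →ₗ[ℝ] E)
    (hC : ∀ x y, ‖C x y‖ = ‖x‖ * ‖y‖) (e : E) (he : ‖e‖ = 1) (hunit : ∀ y, C e y = y)
    (x y z : E) :
    inner ℝ (C x y) z + inner ℝ y (C x z) = 2 * inner ℝ x e * inner ℝ y z := by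
  have hsum := inner_map_left_of_norm_mul C hC (x + e) y z
  simp only [map_add, LinearMap.add_apply, hunit, inner_add_left, inner_add_right,
    norm_add_sq_real, he, inner_map_left_of_norm_mul C hC x y z] at hsum
  linarith

end UnitalComposition

namespace Quaternion

def unitI : ℍ[ℝ] := ⟨0, 1, 0, 0⟩
def unitJ : ℍ[ℝ] := ⟨0, 0, 1, 0⟩
def unitK : ℍ[ℝ] := ⟨0, 0, 0, 1⟩

@[simp] theorem unitI_re : unitI.re = 0 := rfl
@[simp] theorem unitI_imI : unitI.imI = 1 := rfl
@[simp] theorem unitI_imJ : unitI.imJ = 0 := rfl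
@[simp] theorem unitI_imK : unitI.imK = 0 := rfl
@[simp] theorem unitJ_re : unitJ.re = 0 := rfl
@[simp] theorem unitJ_imI : unitJ.imI = 0 := rfl
@[simp] theorem unitJ_imJ : unitJ.imJ = 1 := rfl
@[simp] theorem unitJ_imK : unitJ.imK = 0 := rfl
@[simp] theorem unitK_re : unitK.re = 0 := rfl
@[simp] theorem unitK_imI : unitK.imI = 0 := rfl
@[simp] theorem unitK_imJ : unitK.imJ = 0 := rfl
@[simp] theorem unitK_imK : unitK.imK = 1 := rfl

theorem unitI_mul_unitI : unitI * unitI = -1 := by ext <;> simp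
theorem unitJ_mul_unitJ : unitJ * unitJ = -1 := by ext <;> simp
theorem unitI_mul_unitJ : unitI * unitJ = unitK := by ext <;> simp
theorem unitJ_mul_unitI : unitJ * unitI = -unitK := by ext <;> simp
theorem unitK_mul_unitI : unitK * unitI = unitJ := by ext <;> simp
theorem unitI_mul_unitK : unitI * unitK = -unitJ := by ext <;> simp
theorem unitJ_mul_unitK : unitJ * unitK = unitI := by ext <;> simp
theorem unitK_mul_unitJ : unitK * unitJ = -unitI := by ext <;> simp
theorem unitK_mul_unitK : unitK * unitK = -1 := by ext <;> simp

theorem eq_sum_units (x : ℍ[ℝ]) :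
    x = x.re • 1 + x.imI • unitI + x.imJ • unitJ + x.imK • unitK := by
  ext <;> simp

/-- A norm-multiplicative bilinear product on `ℍ` with unit `1` is the quaternion product or its
opposite. -/
theorem eq_mul_or_eq_mul_swap_of_unital (C : ℍ[ℝ] →ₗ[ℝ] ℍ[ℝ] →ₗ[ℝ] ℍ[ℝ])
    (hC : ∀ x y, ‖C x y‖ = ‖x‖ * ‖y‖) (hleft : ∀ y, C 1 y = y) (hright : ∀ x, C x 1 = x) :
    (∀ x y, C x y = x * y) ∨ (∀ x y, C x y = y * x) := by
  have hl := inner_add_inner_of_left_unit C hC 1 norm_one hleft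
  have hr := inner_add_inner_of_left_unit C.flip
    (fun x y => by rw [LinearMap.flip_apply, hC, mul_comm]) 1 norm_one hright
  simp only [LinearMap.flip_apply] at hr
  obtain ⟨ε, hε⟩ : ∃ ε, ε = (C unitI unitJ).imK := ⟨_, rfl⟩
  have hnorm : normSq (C unitI unitJ) = 1 := by
    rw [normSq_eq_norm_mul_self, hC]
    have hI : ‖unitI‖ * ‖unitI‖ = 1 := by rw [← normSq_eq_norm_mul_self]; simp [normSq_def']
    have hJ : ‖unitJ‖ * ‖unitJ‖ = 1 := by rw [← normSq_eq_norm_mul_self]; simp [normSq_def']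
    linear_combination hI * (‖unitJ‖ * ‖unitJ‖) + hJ
  have hre : ∀ x y, (C x y).re = 2 * x.re * y.re - inner ℝ x y := by
    intro x y
    have := hl x 1 y
    simp only [hright, inner_def, star_one, mul_one, one_mul, re_star] at this ⊢
    linarith
  have hskew_left : ∀ x y z : ℍ[ℝ], x.re = 0 →
      inner ℝ (C x y) z = -inner ℝ (C x z) y := by
    intro x y z hx
    have := hl x y z
    rw [real_inner_comm (C x z) y, inner_def x 1] at this
    simp only [star_one, mul_one, hx] at this
    linarith
  have hskew_right : ∀ x y z : ℍ[ℝ], y.re = 0 →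
      inner ℝ (C x y) z = -inner ℝ (C z y) x := by
    intro x y z hy
    have := hr y x z
    rw [real_inner_comm (C z y) x, inner_def y 1] at this
    simp only [star_one, mul_one, hy] at this
    linarith
  have hmid : ∀ x y : ℍ[ℝ], y.re = 0 → inner ℝ (C x y) x = 0 := fun x y hy => by
    linarith [hskew_right x y x hy]
  have hlast : ∀ x y : ℍ[ℝ], x.re = 0 → inner ℝ (C x y) y = 0 := fun x y hx => by
    linarith [hskew_left x y y hx]
  have hfirst : ∀ x y : ℍ[ℝ], x.re = 0 → y.re = 0 → inner ℝ (C x x) y = 0 := fun x y hx hy => by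
    linarith [hskew_left x x y hx, hmid x y hy]
  have hJI := hskew_left unitJ unitI unitK rfl
  have hJK := hskew_right unitJ unitK unitI rfl
  have hIK := hskew_left unitI unitK unitJ rfl
  have hKJ := hskew_right unitK unitJ unitI rfl
  have hKI := hskew_left unitK unitI unitJ rfl
  have hinnerI : ∀ q : ℍ[ℝ], inner ℝ q unitI = q.imI := fun q => by simp [inner_def]
  have hinnerJ : ∀ q : ℍ[ℝ], inner ℝ q unitJ = q.imJ := fun q => by simp [inner_def]
  have hinnerK : ∀ q : ℍ[ℝ], inner ℝ q unitK = q.imK := fun q => by simp [inner_def]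
  simp only [hinnerI, hinnerJ, hinnerK] at hJI hJK hIK hKJ hKI
  have hext : ∀ p q : ℍ[ℝ], p.re = q.re → inner ℝ p unitI = inner ℝ q unitI →
      inner ℝ p unitJ = inner ℝ q unitJ → inner ℝ p unitK = inner ℝ q unitK → p = q := by
    intro p q h₀ h₁ h₂ h₃
    rw [hinnerI, hinnerI] at h₁
    rw [hinnerJ, hinnerJ] at h₂
    rw [hinnerK, hinnerK] at h₃
    exact QuaternionAlgebra.ext h₀ h₁ h₂ h₃
  have tII : C unitI unitI = -1 := by
    refine hext _ _ ?_ ?_ ?_ ?_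
    · simp only [hre, inner_def]; simp
    · rw [hfirst _ _ rfl rfl]; simp [hinnerI]
    · rw [hfirst _ _ rfl rfl]; simp [hinnerJ]
    · rw [hfirst _ _ rfl rfl]; simp [hinnerK]
  have tJJ : C unitJ unitJ = -1 := by
    refine hext _ _ ?_ ?_ ?_ ?_
    · simp only [hre, inner_def]; simp
    · rw [hfirst _ _ rfl rfl]; simp [hinnerI]
    · rw [hfirst _ _ rfl rfl]; simp [hinnerJ]
    · rw [hfirst _ _ rfl rfl]; simp [hinnerK]
  have tKK : C unitK unitK = -1 := by
    refine hext _ _ ?_ ?_ ?_ ?_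
    · simp only [hre, inner_def]; simp
    · rw [hfirst _ _ rfl rfl]; simp [hinnerI]
    · rw [hfirst _ _ rfl rfl]; simp [hinnerJ]
    · rw [hfirst _ _ rfl rfl]; simp [hinnerK]
  have tIJ : C unitI unitJ = ε • unitK := by
    refine hext _ _ ?_ ?_ ?_ ?_
    · simp only [hre, inner_def]; simp
    · rw [hmid _ _ rfl]; simp [hinnerI]
    · rw [hlast _ _ rfl]; simp [hinnerJ]
    · simp only [hinnerK, imK_smul, unitK_imK, smul_eq_mul]; linarith
  have tJK : C unitJ unitK = ε • unitI := by
    refine hext _ _ ?_ ?_ ?_ ?_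
    · simp only [hre, inner_def]; simp
    · simp only [hinnerI, imI_smul, unitI_imI, smul_eq_mul]; linarith
    · rw [hmid _ _ rfl]; simp [hinnerJ]
    · rw [hlast _ _ rfl]; simp [hinnerK]
  have tKI : C unitK unitI = ε • unitJ := by
    refine hext _ _ ?_ ?_ ?_ ?_
    · simp only [hre, inner_def]; simp
    · rw [hlast _ _ rfl]; simp [hinnerI]
    · simp only [hinnerJ, imJ_smul, unitJ_imJ, smul_eq_mul]; linarith
    · rw [hmid _ _ rfl]; simp [hinnerK]
  have tJI : C unitJ unitI = (-ε) • unitK := by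
    refine hext _ _ ?_ ?_ ?_ ?_
    · simp only [hre, inner_def]; simp
    · rw [hlast _ _ rfl]; simp [hinnerI]
    · rw [hmid _ _ rfl]; simp [hinnerJ]
    · simp only [hinnerK, imK_smul, unitK_imK, smul_eq_mul]; linarith
  have tKJ : C unitK unitJ = (-ε) • unitI := by
    refine hext _ _ ?_ ?_ ?_ ?_
    · simp only [hre, inner_def]; simp
    · simp only [hinnerI, imI_smul, unitI_imI, smul_eq_mul]; linarith
    · rw [hlast _ _ rfl]; simp [hinnerJ]
    · rw [hmid _ _ rfl]; simp [hinnerK]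
  have tIK : C unitI unitK = (-ε) • unitJ := by
    refine hext _ _ ?_ ?_ ?_ ?_
    · simp only [hre, inner_def]; simp
    · rw [hmid _ _ rfl]; simp [hinnerI]
    · simp only [hinnerJ, imJ_smul, unitJ_imJ, smul_eq_mul]; linarith
    · rw [hlast _ _ rfl]; simp [hinnerK]
  have hε_sq : ε * ε = 1 := by
    rw [tIJ] at hnorm
    simpa [normSq_def', pow_two] using hnorm
  have hexpand : ∀ x y, C x y = C (x.re • 1 + x.imI • unitI + x.imJ • unitJ + x.imK • unitK)
      (y.re • 1 + y.imI • unitI + y.imJ • unitJ + y.imK • unitK) := fun x y => by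
    rw [← eq_sum_units, ← eq_sum_units]
  simp only [map_add, map_smul, LinearMap.add_apply, LinearMap.smul_apply, hleft, hright,
    tII, tJJ, tKK, tIJ, tJK, tKI, tJI, tKJ, tIK] at hexpand
  rcases mul_self_eq_one_iff.1 hε_sq with h | h
  · left
    intro x y
    rw [hexpand, h]
    ext <;> simp <;> ring
  · right
    intro x y
    rw [hexpand, h]
    ext <;> simp <;> ring

/-- Quaternion conjugation as a real-linear equivalence. -/
def starEquiv : ℍ[ℝ] ≃ₗ[ℝ] ℍ[ℝ] where
  toFun := star
  invFun := star
  map_add' := star_add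
  map_smul' r x := by simp
  left_inv := star_star
  right_inv := star_star

@[simp] theorem starEquiv_apply (x : ℍ[ℝ]) : starEquiv x = star x := rfl

theorem exists_real_of_commute {q : ℍ[ℝ]} (hI : unitI * q = q * unitI)
    (hJ : unitJ * q = q * unitJ) : ∃ r : ℝ, q = r := by
  refine ⟨q.re, ?_⟩
  have h₁ := congrArg (·.imK) hI
  have h₂ := congrArg (·.imJ) hI
  have h₃ := congrArg (·.imK) hJ
  simp at h₁ h₂ h₃
  ext <;> simp <;> linarith

theorem eq_zero_of_anticommute {q : ℍ[ℝ]} (hI : unitI * q = -(q * unitI))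
    (hJ : unitJ * q = -(q * unitJ)) (hK : unitK * q = -(q * unitK)) : q = 0 := by
  have h₀ := congrArg (·.imI) hI
  have h₁ := congrArg (·.re) hI
  have h₂ := congrArg (·.re) hJ
  have h₃ := congrArg (·.re) hK
  simp at h₀ h₁ h₂ h₃
  ext <;> simp <;> linarith

/-- Every multiplicative linear endomorphism of `ℍ` fixing `1` is inner. -/
theorem exists_conj_of_map_mul (f : ℍ[ℝ] →ₗ[ℝ] ℍ[ℝ]) (hone : f 1 = 1)
    (hmul : ∀ x y, f (x * y) = f x * f y) : ∃ p : ℍ[ℝ], p ≠ 0 ∧ ∀ x, f x = p * x * p⁻¹ := by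
  let T : ℍ[ℝ] → ℍ[ℝ] := fun z =>
    z - f unitI * z * unitI - f unitJ * z * unitJ - f unitK * z * unitK
  have hmul' : ∀ x y z, f x * (f y * z) = f (x * y) * z := fun x y z => by
    rw [hmul, mul_assoc]
  have hTI : ∀ z, f unitI * T z = T z * unitI := fun z => by
    simp only [T, mul_sub, sub_mul, mul_assoc, hmul', unitI_mul_unitI, unitI_mul_unitJ,
      unitI_mul_unitK, unitJ_mul_unitI, unitK_mul_unitI, map_neg, hone]
    noncomm_ring
  have hTJ : ∀ z, f unitJ * T z = T z * unitJ := fun z => by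
    simp only [T, mul_sub, sub_mul, mul_assoc, hmul', unitJ_mul_unitJ, unitI_mul_unitJ,
      unitJ_mul_unitK, unitJ_mul_unitI, unitK_mul_unitJ, map_neg, hone]
    noncomm_ring
  have hTK : ∀ z, f unitK * T z = T z * unitK := fun z => by
    rw [← unitI_mul_unitJ, hmul, mul_assoc, hTJ, ← mul_assoc, hTI, mul_assoc]
  have hT : ∀ z x, f x * T z = T z * x := fun z x => by
    rw [eq_sum_units x]
    simp only [map_add, map_smul, add_mul, mul_add, smul_mul_assoc, mul_smul_comm, hone, hTI, hTJ,
      hTK, one_mul, mul_one]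
  have hsum : T 1 - T unitI * unitI - T unitJ * unitJ - T unitK * unitK = (4 : ℝ) • 1 := by
    simp only [T, mul_assoc, sub_mul, unitI_mul_unitI, unitI_mul_unitJ, unitI_mul_unitK,
      unitJ_mul_unitI, unitJ_mul_unitJ, unitJ_mul_unitK, unitK_mul_unitI, unitK_mul_unitJ,
      unitK_mul_unitK, mul_neg, neg_mul, neg_neg, one_mul, mul_one]
    module
  obtain ⟨z, hz⟩ : ∃ z, T z ≠ 0 := by
    by_contra! hzero
    simp only [hzero, zero_mul, sub_zero] at hsum
    simpa using congrArg (·.re) hsum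
  exact ⟨T z, hz, fun x => by rw [← hT, mul_assoc, mul_inv_cancel₀ hz, mul_one]⟩

/-- A linear isometry of `ℍ` fixing `1` is `x ↦ p * x * p⁻¹` or `x ↦ p * star x * p⁻¹`. -/
theorem exists_conj_of_isometry (f : ℍ[ℝ] ≃ₗᵢ[ℝ] ℍ[ℝ]) (hone : f 1 = 1) :
    ∃ p : ℍ[ℝ], p ≠ 0 ∧ ((∀ x, f x = p * x * p⁻¹) ∨ (∀ x, f x = p * star x * p⁻¹)) := by
  let f' : ℍ[ℝ] →ₗ[ℝ] ℍ[ℝ] := f.toLinearEquiv.toLinearMap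
  let C : ℍ[ℝ] →ₗ[ℝ] ℍ[ℝ] →ₗ[ℝ] ℍ[ℝ] :=
    ((LinearMap.mul ℝ ℍ[ℝ]).compl₁₂ f' f').compr₂ f.symm.toLinearEquiv.toLinearMap
  have hC_apply : ∀ x y, C x y = f.symm (f x * f y) := fun x y => rfl
  rcases eq_mul_or_eq_mul_swap_of_unital C (fun x y => by simp [hC_apply])
    (fun y => by simp [hC_apply, hone]) (fun x => by simp [hC_apply, hone]) with h | h
  · obtain ⟨p, hp, hfp⟩ := exists_conj_of_map_mul f' hone fun x y => by
      change f (x * y) = f x * f y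
      rw [← h, hC_apply, f.apply_symm_apply]
    exact ⟨p, hp, Or.inl hfp⟩
  · obtain ⟨p, hp, hfp⟩ := exists_conj_of_map_mul (f' ∘ₗ starEquiv.toLinearMap)
      (by simpa [f'] using hone) fun x y => by
      change f (star (x * y)) = f (star x) * f (star y)
      rw [star_mul, ← h, hC_apply, f.apply_symm_apply]
    exact ⟨p, hp, Or.inr fun x => by simpa [f'] using hfp (star x)⟩

/-- Left multiplication by a nonzero quaternion as a linear equivalence. -/
noncomputable def mulLeftEquiv (q : ℍ[ℝ]) (hq : q ≠ 0) : ℍ[ℝ] ≃ₗ[ℝ] ℍ[ℝ] :=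
  LinearEquiv.ofInjectiveEndo (LinearMap.mulLeft ℝ q) (mul_right_injective₀ hq)

@[simp] theorem mulLeftEquiv_apply (q : ℍ[ℝ]) (hq : q ≠ 0) (x : ℍ[ℝ]) :
    mulLeftEquiv q hq x = q * x := rfl

/-- Right multiplication by a nonzero quaternion as a linear equivalence. -/
noncomputable def mulRightEquiv (q : ℍ[ℝ]) (hq : q ≠ 0) : ℍ[ℝ] ≃ₗ[ℝ] ℍ[ℝ] :=
  LinearEquiv.ofInjectiveEndo (LinearMap.mulRight ℝ q) (mul_left_injective₀ hq)

@[simp] theorem mulRightEquiv_apply (q : ℍ[ℝ]) (hq : q ≠ 0) (x : ℍ[ℝ]) :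
    mulRightEquiv q hq x = x * q := rfl

/-- An absolute-valued product on `ℍ` is, up to the order of its factors and conjugations,
`a * x * m * y * d`. -/
theorem exists_eq_mul_of_norm_mul (B : ℍ[ℝ] →ₗ[ℝ] ℍ[ℝ] →ₗ[ℝ] ℍ[ℝ])
    (hB : ∀ x y, ‖B x y‖ = ‖x‖ * ‖y‖) :
    ∃ (a m d : ℍ[ℝ]) (s t : ℍ[ℝ] → ℍ[ℝ]), a ≠ 0 ∧ m ≠ 0 ∧ d ≠ 0 ∧ (s = id ∨ s = star) ∧
      (t = id ∨ t = star) ∧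
      ((∀ x y, B x y = a * s x * m * t y * d) ∨ (∀ x y, B x y = a * s y * m * t x * d)) := by
  have hu : ‖B 1 1‖ = 1 := by simp [hB]
  have hu0 : B 1 1 ≠ 0 := norm_ne_zero_iff.1 (by simp [hu])
  set u := B 1 1 with hu_def
  let R : ℍ[ℝ] ≃ₗᵢ[ℝ] ℍ[ℝ] := LinearIsometry.toLinearIsometryEquiv
    ⟨LinearMap.mulLeft ℝ u⁻¹ ∘ₗ B.flip 1, fun x => by simp [hB, hu]⟩ rfl
  let L : ℍ[ℝ] ≃ₗᵢ[ℝ] ℍ[ℝ] := LinearIsometry.toLinearIsometryEquiv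
    ⟨LinearMap.mulLeft ℝ u⁻¹ ∘ₗ B 1, fun x => by simp [hB, hu]⟩ rfl
  have hR : ∀ x, R x = u⁻¹ * B x 1 := fun x => rfl
  have hL : ∀ y, L y = u⁻¹ * B 1 y := fun y => rfl
  have hR1 : R 1 = 1 := by rw [hR, ← hu_def, inv_mul_cancel₀ hu0]
  have hL1 : L 1 = 1 := by rw [hL, ← hu_def, inv_mul_cancel₀ hu0]
  have hRs : R.symm 1 = 1 := by rw [R.symm_apply_eq, hR1]
  have hLs : L.symm 1 = 1 := by rw [L.symm_apply_eq, hL1]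
  let C : ℍ[ℝ] →ₗ[ℝ] ℍ[ℝ] →ₗ[ℝ] ℍ[ℝ] :=
    (B.compl₁₂ R.symm.toLinearEquiv.toLinearMap L.symm.toLinearEquiv.toLinearMap).compr₂
      (LinearMap.mulLeft ℝ u⁻¹)
  have hC : ∀ x y, C x y = u⁻¹ * B (R.symm x) (L.symm y) := fun x y => rfl
  have hBC : ∀ x y, B x y = u * C (R x) (L y) := fun x y => by
    rw [hC, mul_inv_cancel_left₀ hu0, R.symm_apply_apply, L.symm_apply_apply]
  obtain ⟨p, hp, hRp⟩ := exists_conj_of_isometry R hR1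
  obtain ⟨q, hq, hLq⟩ := exists_conj_of_isometry L hL1
  obtain ⟨s, hs, hRs'⟩ : ∃ s : ℍ[ℝ] → ℍ[ℝ], (s = id ∨ s = star) ∧ ∀ x, R x = p * s x * p⁻¹ :=
    hRp.elim (fun h => ⟨id, Or.inl rfl, h⟩) (fun h => ⟨star, Or.inr rfl, h⟩)
  obtain ⟨t, ht, hLt⟩ : ∃ t : ℍ[ℝ] → ℍ[ℝ], (t = id ∨ t = star) ∧ ∀ x, L x = q * t x * q⁻¹ :=
    hLq.elim (fun h => ⟨id, Or.inl rfl, h⟩) (fun h => ⟨star, Or.inr rfl, h⟩)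
  rcases eq_mul_or_eq_mul_swap_of_unital C (fun x y => by simp [hC, hB, hu])
    (fun y => by rw [hC, hRs, ← hL, L.apply_symm_apply])
    (fun x => by rw [hC, hLs, ← hR, R.apply_symm_apply]) with h | h
  · exact ⟨u * p, p⁻¹ * q, q⁻¹, s, t, mul_ne_zero hu0 hp, mul_ne_zero (inv_ne_zero hp) hq,
      inv_ne_zero hq, hs, ht, Or.inl fun x y => by
        rw [hBC, h, hRs', hLt]; simp only [mul_assoc]⟩
  · exact ⟨u * q, q⁻¹ * p, p⁻¹, t, s, mul_ne_zero hu0 hq, mul_ne_zero (inv_ne_zero hq) hp,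
      inv_ne_zero hp, ht, hs, Or.inr fun x y => by
        rw [hBC, h, hRs', hLt]; simp only [mul_assoc]⟩

theorem exists_eq_smul_mul_of_identity {a n : ℍ[ℝ]} (ha : a ≠ 0) (hn : n ≠ 0)
    (h : ∀ x, a * (x * x) * n * a * (x * x) = x * a * x * a * (x * x) * n) :
    ∃ r : ℝ, ∀ x y : ℍ[ℝ], a * x * y * n = r • (x * y) := by
  have hcomm : n * a = a * n := by
    have h₁ := h 1
    simp only [mul_one, one_mul, mul_assoc] at h₁
    exact mul_left_cancel₀ ha h₁
  have hcomm_a : ∀ x : ℍ[ℝ], x * x = -1 → x * a = a * x := fun x hx => by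
    have hx₁ : a * (a * n) = -(x * a * x) * (a * n) := by
      simpa [hx, mul_assoc, hcomm] using h x
    rw [mul_right_cancel₀ (mul_ne_zero ha hn) hx₁]
    have hx₂ := mul_right_cancel₀ (mul_ne_zero ha hn) hx₁
    calc x * -(x * a * x) = -(x * x) * a * x := by noncomm_ring
      _ = -(x * a * x) * x := by rw [neg_mul, neg_mul, ← hx₂, hx]; simp
  obtain ⟨r, rfl⟩ := exists_real_of_commute (hcomm_a _ unitI_mul_unitI) (hcomm_a _ unitJ_mul_unitJ)
  have hr : r ≠ 0 := by rintro rfl; simp at ha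
  have hcomm_n : ∀ x : ℍ[ℝ], x * x = -1 → x * n = n * x := fun x hx => by
    have hx₀ : x ≠ 0 := by rintro rfl; simp at hx
    have hsq : (1 + x) * (1 + x) = (2 : ℝ) • x := by
      rw [add_mul, mul_add, mul_add, hx, mul_one, mul_one, one_mul]; module
    have hx₁ := h (1 + x)
    rw [mul_coe_eq_smul r (1 + x), smul_mul_assoc, hsq] at hx₁
    simp only [coe_mul_eq_smul, mul_coe_eq_smul, smul_mul_assoc, mul_smul_comm, smul_smul] at hx₁
    rw [mul_right_comm r 2 r, mul_comm 2 r, mul_right_comm r 2 r] at hx₁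
    have hx₂ := smul_right_injective ℍ[ℝ] (by positivity) hx₁
    simp only [mul_assoc] at hx₂
    exact (mul_left_cancel₀ hx₀ hx₂).symm
  obtain ⟨c, rfl⟩ := exists_real_of_commute (hcomm_n _ unitI_mul_unitI) (hcomm_n _ unitJ_mul_unitJ)
  refine ⟨r * c, fun x y => ?_⟩
  rw [mul_coe_eq_smul, mul_assoc, coe_mul_eq_smul, smul_smul, mul_comm c]

theorem exists_eq_smul_mul_star_of_identity {a m : ℍ[ℝ]} (ha : a ≠ 0) (hm : m ≠ 0)
    (h : ∀ x, a * x * m * star x * m * x = x * m * a * x * m * star x) :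
    ∃ r : ℝ, ∀ x y : ℍ[ℝ], a * x * m * star y = r • (x * star y) := by
  have hcomm : m * a = a * m := by
    have h₁ := h 1
    simp only [mul_one, star_one] at h₁
    simpa using (mul_right_cancel₀ hm h₁).symm
  have hcomm_a : ∀ x : ℍ[ℝ], x * x = -1 → star x = -x → x * a = a * x := fun x hx hs => by
    have hx₀ : x ≠ 0 := by rintro rfl; simp at hx
    have hx₁ : a * x * (m * x * m * x) = x * a * (m * x * m * x) := by
      simpa [hs, mul_assoc, ← mul_assoc m a, hcomm] using h x
    exact (mul_right_cancel₀ (by simp [hm, hx₀]) hx₁).symm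
  obtain ⟨r, rfl⟩ := exists_real_of_commute (hcomm_a _ unitI_mul_unitI (by ext <;> simp))
    (hcomm_a _ unitJ_mul_unitJ (by ext <;> simp))
  have hr : r ≠ 0 := by rintro rfl; simp at ha
  have hcomm_m : ∀ x : ℍ[ℝ], x * x = -1 → star x = -x → x * m = m * x := fun x hx hs => by
    have hx₀ : (1 + x) ≠ 0 := fun h0 => by
      rw [eq_neg_of_add_eq_zero_right h0] at hx
      have hre := congrArg (·.re) hx
      norm_num at hre
    have hx₁ := h (1 + x)
    simp only [coe_mul_eq_smul, mul_coe_eq_smul, smul_mul_assoc] at hx₁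
    have hx₂ := smul_right_injective ℍ[ℝ] hr hx₁
    simp only [mul_assoc] at hx₂
    have hx₃ := mul_left_cancel₀ hm (mul_left_cancel₀ hx₀ hx₂)
    simp only [star_add, star_one, hs] at hx₃
    have hx₄ : (2 : ℝ) • (x * m) = (2 : ℝ) • (m * x) := by
      rw [two_smul, two_smul]
      rw [← sub_eq_zero] at hx₃ ⊢
      rw [← neg_eq_zero, ← hx₃]
      noncomm_ring
    exact smul_right_injective ℍ[ℝ] two_ne_zero hx₄
  obtain ⟨c, rfl⟩ := exists_real_of_commute (hcomm_m _ unitI_mul_unitI (by ext <;> simp))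
    (hcomm_m _ unitJ_mul_unitJ (by ext <;> simp))
  refine ⟨r * c, fun x y => ?_⟩
  simp only [coe_mul_eq_smul, mul_coe_eq_smul, smul_mul_assoc, smul_smul]

theorem exists_pure_commute (m : ℍ[ℝ]) : ∃ v : ℍ[ℝ], v ≠ 0 ∧ star v = -v ∧ v * m = m * v := by
  by_cases hm : m - star m = 0
  · refine ⟨unitI, fun h => by simpa using congrArg (·.imI) h, by ext <;> simp, ?_⟩
    obtain ⟨r, rfl⟩ : ∃ r : ℝ, m = r := ⟨m.re, Quaternion.star_eq_self.1 (sub_eq_zero.1 hm).symm⟩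
    rw [coe_mul_eq_smul, mul_coe_eq_smul]
  · refine ⟨m - star m, hm, by simp, ?_⟩
    rw [sub_mul, mul_sub, star_mul_self, self_mul_star]

theorem not_identity_star_left {m d : ℍ[ℝ]} (hm : m ≠ 0) (hd : d ≠ 0) :
    ¬ ∀ x, star d * star x * star m * x * m * star x * m * x
      = star x * m * star x * m * star x * m * x * d := by
  intro h
  obtain ⟨v, hv, hs, hvm⟩ := exists_pure_commute m
  have hvm' : v * star m = star m * v := by simpa [hs] using (congrArg star hvm).symm
  have hsq : v * v = ((-normSq v : ℝ) : ℍ[ℝ]) := by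
    rw [coe_neg, ← self_mul_star, hs, mul_neg, neg_neg]
  have hc : -normSq v ≠ 0 := by simpa using hv
  generalize -normSq v = c at hsq hc
  have h₁ := h 1
  have hv₁ := h v
  simp only [star_one, mul_one, one_mul] at h₁
  have hl : star d * star v * star m * v * m * star v * m * v
      = (c * c) • (star d * star m * m * m) := by
    calc _ = star d * (v * star m) * v * m * v * m * v := by rw [hs]; noncomm_ring
      _ = star d * star m * (v * v) * m * (v * m) * v := by rw [hvm']; noncomm_ring
      _ = star d * star m * (v * v) * m * m * (v * v) := by rw [hvm]; noncomm_ring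
      _ = _ := by
        simp only [hsq, mul_coe_eq_smul, smul_mul_assoc, smul_smul]
  have hr : star v * m * star v * m * star v * m * v * d = -((c * c) • (m * m * m * d)) := by
    calc _ = -((v * m) * v * m * (v * m) * v * d) := by rw [hs]; noncomm_ring
      _ = -(m * (v * v) * m * m * (v * v) * d) := by rw [hvm]; noncomm_ring
      _ = _ := by
        simp only [hsq, mul_coe_eq_smul, smul_mul_assoc, smul_smul]
  rw [hl, hr, h₁, eq_neg_iff_add_eq_zero, ← two_smul ℝ] at hv₁
  simp [hm, hd, hc] at hv₁

theorem not_identity_star_star {a d : ℍ[ℝ]} (ha : a ≠ 0) (hd : d ≠ 0) :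
    ¬ ∀ x, star d * (x * x) * star a * star d * (x * x)
      = star x * star d * a * (star x * star x) * d * x := by
  intro h
  have h₁ := h 1
  simp only [star_one, mul_one, one_mul] at h₁
  have hanti : ∀ x : ℍ[ℝ], x * x = -1 → star x = -x →
      x * (star d * a * d) = -(star d * a * d * x) := fun x hx hs => by
    have hx₁ := h x
    simp only [hs, neg_mul_neg] at hx₁
    simp only [hx, neg_mul, mul_neg, neg_neg, mul_one, h₁] at hx₁
    calc x * (star d * a * d) = (x * x) * (star d * a * d * x) := by
          conv_lhs => rw [hx₁]
          noncomm_ring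
      _ = _ := by rw [hx, neg_one_mul]
  have hzero := eq_zero_of_anticommute (hanti _ unitI_mul_unitI (by ext <;> simp))
    (hanti _ unitJ_mul_unitJ (by ext <;> simp)) (hanti _ unitK_mul_unitK (by ext <;> simp))
  simp [ha, hd] at hzero

/-- In coordinates of `ℍ`, a four-dimensional absolute-valued product is `a * x * m * y * d` up to
conjugation of the factors. -/
theorem exists_equiv_eq_mul {A : Type*} [NormedAddCommGroup A] [NormedSpace ℝ A]
    (mul : A →ₗ[ℝ] A →ₗ[ℝ] A) (habs : ∀ x y : A, ‖mul x y‖ = ‖x‖ * ‖y‖)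
    (hdim : Module.finrank ℝ A = 4) :
    ∃ (e : A ≃ₗ[ℝ] ℍ[ℝ]) (a m d : ℍ[ℝ]) (s t : ℍ[ℝ] → ℍ[ℝ]), a ≠ 0 ∧ m ≠ 0 ∧ d ≠ 0 ∧
      (s = id ∨ s = star) ∧ (t = id ∨ t = star) ∧
      ∀ x y, e (mul x y) = a * s (e x) * m * t (e y) * d := by
  obtain ⟨f⟩ := exists_isometry_quaternion mul habs hdim
  let f' : ℍ[ℝ] →ₗ[ℝ] A := f.symm.toLinearEquiv.toLinearMap
  let B : ℍ[ℝ] →ₗ[ℝ] ℍ[ℝ] →ₗ[ℝ] ℍ[ℝ] :=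
    (mul.compl₁₂ f' f').compr₂ f.toLinearEquiv.toLinearMap
  have hB : ∀ x y, B x y = f (mul (f.symm x) (f.symm y)) := fun x y => rfl
  have hmul : ∀ x y, f (mul x y) = B (f x) (f y) := fun x y => by simp [hB]
  obtain ⟨a, m, d, s, t, ha, hm, hd, hs, ht, h | h⟩ :=
    exists_eq_mul_of_norm_mul B fun x y => by simp [hB, habs]
  · exact ⟨f.toLinearEquiv, a, m, d, s, t, ha, hm, hd, hs, ht, fun x y => by
      simpa [h] using hmul x y⟩
  · have hstar : ∀ {g : ℍ[ℝ] → ℍ[ℝ]}, g = id ∨ g = star → ∀ x, star (g x) = g (star x) := by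
      rintro g (rfl | rfl) x <;> rfl
    refine ⟨f.toLinearEquiv.trans starEquiv, star d, star m, star a, t, s, by simpa, by simpa,
      by simpa, ht, hs, fun x y => ?_⟩
    simp [hmul, h, hstar hs, hstar ht, mul_assoc]

end Quaternion

section Identity

variable {A : Type*} [AddCommGroup A] [Module ℝ A] {mul : A →ₗ[ℝ] A →ₗ[ℝ] A}

/-- Transport of the identity `(x, x, x²) = 0` along a linear equivalence. -/
theorem LinearEquiv.sq_mul_sq_eq {M : Type*} [AddCommGroup M] [Module ℝ M] {P : M → M → M}
    (hid : ∀ x : A, mul (mul x x) (mul x x) = mul x (mul x (mul x x)))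
    (e : A ≃ₗ[ℝ] M) (h : ∀ x y, e (mul x y) = P (e x) (e y)) (x : M) :
    P (P x x) (P x x) = P x (P x (P x x)) := by
  simpa [h] using congrArg e (hid (e.symm x))

namespace Quaternion

theorem exists_equiv_mul_of_mul {e : A ≃ₗ[ℝ] ℍ[ℝ]} {a m d : ℍ[ℝ]} (ha : a ≠ 0) (hm : m ≠ 0)
    (hd : d ≠ 0) (h : ∀ x y, e (mul x y) = a * e x * m * e y * d)
    (hid : ∀ x : A, mul (mul x x) (mul x x) = mul x (mul x (mul x x))) :
    ∃ e : A ≃ₗ[ℝ] ℍ[ℝ], ∀ x y : A, e (mul x y) = e x * e y := by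
  let g := e.trans (mulRightEquiv m hm)
  have hn : m⁻¹ * d * m ≠ 0 := by simp [hm, hd]
  generalize hn_def : m⁻¹ * d * m = n at hn
  have hg : ∀ x y, g (mul x y) = a * g x * g y * n := fun x y => by
    simp [g, h, mul_assoc, ← hn_def, mul_inv_cancel_left₀ hm]
  obtain ⟨r, hr⟩ := exists_eq_smul_mul_of_identity ha hn fun x => by
    have hx := LinearEquiv.sq_mul_sq_eq (P := fun x y => a * x * y * n) hid g hg x
    refine mul_left_cancel₀ ha (mul_right_cancel₀ hn (mul_right_cancel₀ hn ?_))
    simpa only [mul_assoc] using hx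
  have hr₀ : r ≠ 0 := by
    rintro rfl
    simpa [ha, hn] using hr 1 1
  refine ⟨g.trans (LinearEquiv.smulOfNeZero ℝ _ r hr₀), fun x y => ?_⟩
  simp [hg, hr, smul_smul]

theorem exists_equiv_mul_star_of_mul {e : A ≃ₗ[ℝ] ℍ[ℝ]} {a m d : ℍ[ℝ]} (ha : a ≠ 0)
    (hm : m ≠ 0) (hd : d ≠ 0) (h : ∀ x y, e (mul x y) = a * e x * m * star (e y) * d)
    (hid : ∀ x : A, mul (mul x x) (mul x x) = mul x (mul x (mul x x))) :
    ∃ e : A ≃ₗ[ℝ] ℍ[ℝ], ∀ x y : A, e (mul x y) = e x * star (e y) := by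
  let g := e.trans (mulRightEquiv d⁻¹ (inv_ne_zero hd))
  have hn : d * m * star d ≠ 0 := by simp [hm, hd]
  generalize hn_def : d * m * star d = n at hn
  have hg : ∀ x y, g (mul x y) = a * g x * n * star (g y) := fun x y => by
    simp [g, h, mul_assoc, ← hn_def, hd]
  obtain ⟨r, hr⟩ := exists_eq_smul_mul_star_of_identity ha hn fun x => by
    rcases eq_or_ne x 0 with rfl | hx₀
    · simp
    have hx := LinearEquiv.sq_mul_sq_eq (P := fun x y => a * x * n * star y) hid g hg x
    refine mul_left_cancel₀ ha (mul_right_cancel₀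
      (by simp [ha, hn, hx₀] : star n * star x * star a ≠ 0) ?_)
    simpa only [mul_assoc, star_mul, star_star] using hx
  have hr₀ : r ≠ 0 := by
    rintro rfl
    simpa [ha, hn] using hr 1 1
  refine ⟨g.trans (LinearEquiv.smulOfNeZero ℝ _ r hr₀), fun x y => ?_⟩
  simp [hg, hr, smul_smul]

theorem not_identity_of_star_mul {e : A ≃ₗ[ℝ] ℍ[ℝ]} {a m d : ℍ[ℝ]} (ha : a ≠ 0)
    (hm : m ≠ 0) (hd : d ≠ 0) (h : ∀ x y, e (mul x y) = a * star (e x) * m * e y * d) :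
    ¬ ∀ x : A, mul (mul x x) (mul x x) = mul x (mul x (mul x x)) := by
  intro hid
  let g := e.trans (mulLeftEquiv a⁻¹ (inv_ne_zero ha))
  have hn : star a * m * a ≠ 0 := by simp [hm, ha]
  generalize hn_def : star a * m * a = n at hn
  have hg : ∀ x y, g (mul x y) = star (g x) * n * g y * d := fun x y => by
    simp [g, h, mul_assoc, ← hn_def, ha]
  refine not_identity_star_left hn hd fun x => ?_
  have hx := LinearEquiv.sq_mul_sq_eq (P := fun x y => star x * n * y * d) hid g hg x
  refine mul_right_cancel₀ hd (mul_right_cancel₀ hd ?_)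
  simpa only [mul_assoc, star_mul, star_star] using hx

theorem not_identity_of_star_mul_star {e : A ≃ₗ[ℝ] ℍ[ℝ]} {a m d : ℍ[ℝ]} (ha : a ≠ 0)
    (hm : m ≠ 0) (hd : d ≠ 0)
    (h : ∀ x y, e (mul x y) = a * star (e x) * m * star (e y) * d) :
    ¬ ∀ x : A, mul (mul x x) (mul x x) = mul x (mul x (mul x x)) := by
  intro hid
  have hm' : star m ≠ 0 := by simpa
  let g := e.trans (mulLeftEquiv (star m) hm')
  have hb : star m * a ≠ 0 := by simp [hm, ha]
  have hc : m⁻¹ * d ≠ 0 := by simp [hm, hd]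
  generalize hb_def : star m * a = b at hb
  generalize hc_def : m⁻¹ * d = c at hc
  have hg : ∀ x y, g (mul x y) = b * star (g x) * star (g y) * c := fun x y => by
    simp [g, h, mul_assoc, ← hb_def, ← hc_def, hm]
  refine not_identity_star_star hb hc fun x => ?_
  have hx := LinearEquiv.sq_mul_sq_eq (P := fun x y => b * star x * star y * c) hid g hg x
  refine mul_left_cancel₀ hb (mul_right_cancel₀ (by simp [hb, hc] : star b * c ≠ 0) ?_)
  simpa only [mul_assoc, star_mul, star_star] using hx

end Quaternion

end Identity

end Classification

/-- A 4-dimensional absolute-valued real algebra satisfies the identity `(x, x, x²) = 0`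
if and only if it is isomorphic to `ℍ` or to `ℍ*` (product `x ⊙ y = x * ȳ`). -/
theorem stmt_9 {A : Type*} [NormedAddCommGroup A] [NormedSpace ℝ A]
    (mul : A →ₗ[ℝ] A →ₗ[ℝ] A)
    (habs : ∀ x y : A, ‖mul x y‖ = ‖x‖ * ‖y‖)
    (hdim : Module.finrank ℝ A = 4) :
    (∀ x : A, mul (mul x x) (mul x x) = mul x (mul x (mul x x)))
      ↔ ((∃ e : A ≃ₗ[ℝ] Quaternion ℝ, ∀ x y : A, e (mul x y) = e x * e y) ∨
          (∃ e : A ≃ₗ[ℝ] Quaternion ℝ,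
            ∀ x y : A, e (mul x y) = e x * star (e y))) := by
  constructor
  · intro hid
    obtain ⟨e, a, m, d, s, t, ha, hm, hd, rfl | rfl, rfl | rfl, h⟩ :=
      Quaternion.exists_equiv_eq_mul mul habs hdim
    · exact Or.inl (Quaternion.exists_equiv_mul_of_mul ha hm hd h hid)
    · exact Or.inr (Quaternion.exists_equiv_mul_star_of_mul ha hm hd h hid)
    · exact (Quaternion.not_identity_of_star_mul ha hm hd h hid).elim
    · exact (Quaternion.not_identity_of_star_mul_star ha hm hd h hid).elim
  · rintro (⟨e, h⟩ | ⟨e, h⟩) x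
    · exact e.injective (by simp only [h, mul_assoc])
    · refine e.injective ?_
      simp only [h, Quaternion.self_mul_star, Quaternion.star_coe, Quaternion.mul_coe_eq_smul,
        Quaternion.star_smul, mul_smul_comm]
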